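/- Let V = (v_1, …, v_n) be a sequence of vectors in ℝ^d with n even, let a, b > 0 be reals, and let V̄ = (½(v_1+v_2), ½(v_3+v_4), …, ½(v_{n−1}+v_n)). Then p_{a+b}(V) ≥ q_a(V̄) · min_{D ⊆ δ(V)} p_b(D), where D ranges over all subsequences of the difference sequence δ(V) = (v_1−v_2, v_3−v_4, …, v_{n−1}−v_n). -/

import Mathlib

/-!
Write `σ_V` with signs `(ε_i, -ε'_i)` on the `i`-th pair of vectors `(v, v')`, where `ε, ε'` are
independent. Since `ε v - ε' v' = (ε - ε') · ½(v + v') + [ε = ε'] · ε (v - v')`, the sum `σ_V` is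
`X - X'` (for two independent samples of the averaged sequence) plus the signed sum of the
differences over `S = {i | ε_i = ε'_i}` (`signedSum_pairSigns`). The first part does not change when
the common values of `ε, ε'` on `S` are replaced by fresh signs `η`, so conditionally on the event
`‖X - X'‖ ≤ a` and on `S`, the second part has norm at most `b` with probability at least the
minimum over `S`.

In counting form, the resampling is the map `(ε, ε', η) ↦ (ε, ε', η)` exchanging the common value on
`S` with `η`. It is injective (`resample_injective`), so the triples with `‖X - X'‖ ≤ a` and
`‖∑_{i ∈ S} η_i (v - v')‖ ≤ b` inject into the product of the good sign vectors for `V` with the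
`2 ^ m` choices of the leftover signs.
-/

/-- The real sign `+1` or `-1` associated to a Boolean. -/
noncomputable def rsign (b : Bool) : ℝ := if b then 1 else -1

/-- The signed sum `ε₁ v₁ + ⋯ + εₙ vₙ` determined by a vector of Booleans. -/
noncomputable def signedSum {d n : ℕ} (V : Fin n → EuclideanSpace ℝ (Fin d))
    (ε : Fin n → Bool) : EuclideanSpace ℝ (Fin d) :=
  ∑ i, rsign (ε i) • V i

/-- `probLe V r` is the probability, over independent uniform signs
`ε ∈ {−1,+1}ⁿ`, that `‖ε₁ v₁ + ⋯ + εₙ vₙ‖ ≤ r`; this is `p_r(V)`. -/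
noncomputable def probLe {d n : ℕ} (V : Fin n → EuclideanSpace ℝ (Fin d)) (r : ℝ) : ℝ :=
  (Nat.card {ε : Fin n → Bool // ‖signedSum V ε‖ ≤ r} : ℝ) / 2 ^ n

/-- `probDiffLe V r` is the probability that two independent samples `X, X'` of the random
signed sum `σ_V` satisfy `‖X − X'‖ ≤ r`; this is `q_r(V)`. -/
noncomputable def probDiffLe {d n : ℕ} (V : Fin n → EuclideanSpace ℝ (Fin d)) (r : ℝ) : ℝ :=
  (Nat.card {p : (Fin n → Bool) × (Fin n → Bool) //
      ‖signedSum V p.1 - signedSum V p.2‖ ≤ r} : ℝ) / 4 ^ n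

/-- `probSubLe W S r` is `p_r(D)` for the subsequence `D` of `W` given by the index set `S`:
the probability over independent Rademacher signs that `‖Σ_{i ∈ S} εᵢ wᵢ‖ ≤ r`. -/
noncomputable def probSubLe {d n : ℕ} (W : Fin n → EuclideanSpace ℝ (Fin d))
    (S : Finset (Fin n)) (r : ℝ) : ℝ :=
  (Nat.card {ε : Fin n → Bool // ‖∑ i ∈ S, rsign (ε i) • W i‖ ≤ r} : ℝ) / 2 ^ n

/-- The set of indices at which two sign vectors agree. -/
def agreeSet {m : ℕ} (p : (Fin m → Bool) × (Fin m → Bool)) : Finset (Fin m) :=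
  Finset.univ.filter fun i => p.1 i = p.2 i

/-- Replacement of the common values of two sign vectors, on the set where they agree,
by the signs `η`. -/
def resample {m : ℕ} (p : (Fin m → Bool) × (Fin m → Bool)) (η : Fin m → Bool) :
    (Fin m → Bool) × (Fin m → Bool) :=
  (fun i => if p.1 i = p.2 i then η i else p.1 i, fun i => if p.1 i = p.2 i then η i else p.2 i)

/-- The signs left over by `resample`: the replaced common values on the agreement set,
the unused entries of `η` elsewhere. -/
def leftover {m : ℕ} (p : (Fin m → Bool) × (Fin m → Bool)) (η : Fin m → Bool) : Fin m → Bool :=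
  fun i => if p.1 i = p.2 i then p.1 i else η i

/-- The sign vector of length `2 * m` interleaving the first component of `p` with the negation of
the second one. -/
def pairSigns {m : ℕ} (p : (Fin m → Bool) × (Fin m → Bool)) : Fin (2 * m) → Bool :=
  fun j => if j.1 % 2 = 0 then p.1 ⟨j.1 / 2, by have := j.2; omega⟩
    else !p.2 ⟨j.1 / 2, by have := j.2; omega⟩

lemma pairSigns_even {m : ℕ} (p : (Fin m → Bool) × (Fin m → Bool)) (i : Fin m)
    (h : 2 * i.1 < 2 * m) : pairSigns p ⟨2 * i.1, h⟩ = p.1 i := by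
  simp [pairSigns]

lemma pairSigns_odd {m : ℕ} (p : (Fin m → Bool) × (Fin m → Bool)) (i : Fin m)
    (h : 2 * i.1 + 1 < 2 * m) : pairSigns p ⟨2 * i.1 + 1, h⟩ = !p.2 i := by
  have h2 : (2 * i.1 + 1) / 2 = i.1 := by omega
  simp [pairSigns, h2]

lemma pairSigns_injective {m : ℕ} :
    Function.Injective (pairSigns : (Fin m → Bool) × (Fin m → Bool) → _) := by
  intro p q h
  ext i
  · have := congrFun h ⟨2 * i.1, by have := i.2; omega⟩
    rw [pairSigns_even, pairSigns_even] at this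
    rw [this]
  · have := congrFun h ⟨2 * i.1 + 1, by have := i.2; omega⟩
    rw [pairSigns_odd, pairSigns_odd] at this
    rw [Bool.not_inj this]

/-- The exchange map is an involution, hence injective. -/
lemma resample_injective {m : ℕ} {p q : (Fin m → Bool) × (Fin m → Bool)} {η θ : Fin m → Bool}
    (h : resample p η = resample q θ) (h' : leftover p η = leftover q θ) : p = q ∧ η = θ := by
  have key : ∀ i, p.1 i = q.1 i ∧ p.2 i = q.2 i ∧ η i = θ i := by
    intro i
    have h1 := congrFun (congrArg Prod.fst h) i
    have h2 := congrFun (congrArg Prod.snd h) i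
    have h3 := congrFun h' i
    simp only [resample, leftover] at h1 h2 h3
    grind
  exact ⟨Prod.ext (funext fun i => (key i).1) (funext fun i => (key i).2.1),
    funext fun i => (key i).2.2⟩

lemma two_mul_lt {m : ℕ} (i : Fin m) : 2 * i.1 < 2 * m := by
  have := i.2
  omega

lemma two_mul_add_one_lt {m : ℕ} (i : Fin m) : 2 * i.1 + 1 < 2 * m := by
  have := i.2
  omega

lemma sum_fin_two_mul {M : Type*} [AddCommMonoid M] (m : ℕ) (f : Fin (2 * m) → M) :
    ∑ j, f j = ∑ i : Fin m, (f ⟨2 * i.1, two_mul_lt i⟩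
      + f ⟨2 * i.1 + 1, two_mul_add_one_lt i⟩) := by
  induction m with
  | zero => simp
  | succ m ih =>
    have e : ∑ j, f j = ∑ j : Fin (2 * m + 1 + 1), f j := rfl
    rw [e, Fin.sum_univ_castSucc, Fin.sum_univ_castSucc, Fin.sum_univ_castSucc, add_assoc]
    congr 1
    exact ih fun j => f ⟨j.1, by have := j.2; omega⟩

/-- After resampling, the signed sum of `V` splits into the original difference of two samples of
the averaged sequence and a freshly signed sum of differences over the agreement set. -/
lemma signedSum_pairSigns {d m : ℕ} (V : Fin (2 * m) → EuclideanSpace ℝ (Fin d))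
    (p : (Fin m → Bool) × (Fin m → Bool)) (η : Fin m → Bool) :
    signedSum V (pairSigns (resample p η)) =
      (signedSum (fun i : Fin m => (1 / 2 : ℝ) • (V ⟨2 * i.1, two_mul_lt i⟩
          + V ⟨2 * i.1 + 1, two_mul_add_one_lt i⟩)) p.1
        - signedSum (fun i : Fin m => (1 / 2 : ℝ) • (V ⟨2 * i.1, two_mul_lt i⟩
          + V ⟨2 * i.1 + 1, two_mul_add_one_lt i⟩)) p.2)
      + ∑ i ∈ agreeSet p, rsign (η i) • (V ⟨2 * i.1, two_mul_lt i⟩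
          - V ⟨2 * i.1 + 1, two_mul_add_one_lt i⟩) := by
  unfold signedSum agreeSet
  rw [sum_fin_two_mul, Finset.sum_filter, ← Finset.sum_sub_distrib, ← Finset.sum_add_distrib]
  refine Finset.sum_congr rfl fun i _ => ?_
  rw [pairSigns_even, pairSigns_odd]
  simp only [resample]
  cases p.1 i <;> cases p.2 i <;> cases η i <;> simp [rsign] <;> module

/-- Lemma 2.2 (even case): for a sequence `V` of `n = 2m` vectors in `ℝ^d` and reals
`a, b > 0`, letting `V̄ = (½(v₁+v₂), …, ½(v_{n−1}+vₙ))` and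
`δ(V) = (v₁−v₂, …, v_{n−1}−vₙ)`, we have
`p_{a+b}(V) ≥ q_a(V̄) · min_{D ⊆ δ(V)} p_b(D)`. -/
theorem stmt_3 (d m : ℕ) (a b : ℝ) (ha : 0 < a) (hb : 0 < b)
    (V : Fin (2 * m) → EuclideanSpace ℝ (Fin d)) :
    probDiffLe (fun i : Fin m =>
        (1 / 2 : ℝ) • (V ⟨2 * i.1, by have := i.2; omega⟩
          + V ⟨2 * i.1 + 1, by have := i.2; omega⟩)) a *
      (Finset.univ.inf' Finset.univ_nonempty fun S : Finset (Fin m) =>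
        probSubLe (fun i : Fin m =>
          V ⟨2 * i.1, by have := i.2; omega⟩ - V ⟨2 * i.1 + 1, by have := i.2; omega⟩) S b)
    ≤ probLe V (a + b) := by
  set A : Fin m → EuclideanSpace ℝ (Fin d) := fun i : Fin m =>
        (1 / 2 : ℝ) • (V ⟨2 * i.1, by have := i.2; omega⟩
          + V ⟨2 * i.1 + 1, by have := i.2; omega⟩) with hA
  set W : Fin m → EuclideanSpace ℝ (Fin d) := fun i : Fin m =>
          V ⟨2 * i.1, by have := i.2; omega⟩ - V ⟨2 * i.1 + 1, by have := i.2; omega⟩ with hW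
  set μ : ℝ := Finset.univ.inf' Finset.univ_nonempty fun S : Finset (Fin m) => probSubLe W S b
    with hμ
  let P := {p : (Fin m → Bool) × (Fin m → Bool) // ‖signedSum A p.1 - signedSum A p.2‖ ≤ a}
  let H : P → Type := fun p => {η : Fin m → Bool // ‖∑ i ∈ agreeSet p.1, rsign (η i) • W i‖ ≤ b}
  let G := {ε : Fin (2 * m) → Bool // ‖signedSum V ε‖ ≤ a + b}
  have : Fintype P := Fintype.ofFinite P
  have hH : ∀ p : P, μ * 2 ^ m ≤ (Nat.card (H p) : ℝ) := by
    intro p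
    have h : μ ≤ probSubLe W (agreeSet p.1) b := Finset.inf'_le _ (Finset.mem_univ _)
    exact (le_div_iff₀ (by positivity)).1 h
  let Φ : (Σ p : P, H p) → G × (Fin m → Bool) := fun x =>
    (⟨pairSigns (resample x.1.1 x.2.1), by
      rw [signedSum_pairSigns]
      exact (norm_add_le _ _).trans (add_le_add x.1.2 x.2.2)⟩, leftover x.1.1 x.2.1)
  have hΦ : Function.Injective Φ := by
    rintro ⟨⟨p, hp⟩, ⟨η, hη⟩⟩ ⟨⟨q, hq⟩, ⟨θ, hθ⟩⟩ h
    have h1 := pairSigns_injective (congrArg Subtype.val (congrArg Prod.fst h))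
    obtain ⟨rfl, rfl⟩ := resample_injective h1 (congrArg Prod.snd h)
    rfl
  have : ∀ p, Finite (H p) := fun p => inferInstanceAs (Finite (Subtype _))
  have hcard : ∑ p : P, Nat.card (H p) ≤ Nat.card G * 2 ^ m := by
    have h := Nat.card_le_card_of_injective Φ hΦ
    rw [Nat.card_sigma, Nat.card_prod] at h
    simpa using h
  have hreal : (Nat.card P : ℝ) * (μ * 2 ^ m) ≤ Nat.card G * 2 ^ m := by
    calc (Nat.card P : ℝ) * (μ * 2 ^ m) = ∑ _p : P, μ * 2 ^ m := by
          simp [Nat.card_eq_fintype_card]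
      _ ≤ ∑ p : P, (Nat.card (H p) : ℝ) := Finset.sum_le_sum fun p _ => hH p
      _ ≤ Nat.card G * 2 ^ m := by exact_mod_cast hcard
  have hfin : (Nat.card P : ℝ) * μ ≤ Nat.card G := by
    rw [← mul_assoc] at hreal
    exact le_of_mul_le_mul_right hreal (by positivity)
  have h4 : (2 : ℝ) ^ (2 * m) = 4 ^ m := by rw [pow_mul]; norm_num
  change (Nat.card P : ℝ) / 4 ^ m * μ ≤ (Nat.card G : ℝ) / 2 ^ (2 * m)
  rw [h4, div_mul_eq_mul_div]
  gcongr
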